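/- arXiv:2411.00022 — 2 statements merged into one kernel-verified Lean document; each statement's English description precedes it below -/
import Mathlib

section
/- Let A be an n×n complex matrix with k = Ind(A), let m be a positive integer, set A₁ = A A^{w_m} A, and let X be an n×n complex matrix. The following conditions are equivalent: (a) X = A^{w_m,†}; (b) R(X) = R(A^k) and A X = A₁ A^†; (c) R(X) = R(A^k) and A^* A X = A^* A₁ A^†; (d) R(X) = R(A^k) and A^k X = A₁^k A^†; (e) N(X) = N((A^k)^* A^{m+1} A^†) and X A = A^{w_m} A; (f) N(X) = N((A^k)^* A^{m+1} A^†) and X A A^* = A^{w_m} A A^*. -/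
open Matrix

/-- `X` is the Moore–Penrose inverse of `A`. -/
def IsMoorePenrose {p q : ℕ} (A : Matrix (Fin p) (Fin q) ℂ)
    (X : Matrix (Fin q) (Fin p) ℂ) : Prop :=
  A * X * A = A ∧ X * A * X = X ∧ (A * X)ᴴ = A * X ∧ (X * A)ᴴ = X * A

/-- `k` is the index of `A`: the smallest nonnegative integer `j` with
`rank (A ^ (j+1)) = rank (A ^ j)`. -/
def HasIndex {n : ℕ} (A : Matrix (Fin n) (Fin n) ℂ) (k : ℕ) : Prop :=
  (A ^ (k + 1)).rank = (A ^ k).rank ∧ ∀ j < k, (A ^ (j + 1)).rank ≠ (A ^ j).rank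

/-- `X` is the core-EP inverse of `A` (with `k = Ind A`). -/
def IsCoreEP {n : ℕ} (A : Matrix (Fin n) (Fin n) ℂ) (k : ℕ)
    (X : Matrix (Fin n) (Fin n) ℂ) : Prop :=
  X * A ^ (k + 1) = A ^ k ∧ A * X ^ 2 = X ∧ (A * X)ᴴ = A * X

/-- `X` is the Drazin inverse of `A` (with `k = Ind A`). -/
def IsDrazin {n : ℕ} (A : Matrix (Fin n) (Fin n) ℂ) (k : ℕ)
    (X : Matrix (Fin n) (Fin n) ℂ) : Prop :=
  X * A * X = X ∧ A * X = X * A ∧ X * A ^ (k + 1) = A ^ k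

/-! Let `E` be the core-EP inverse of `A`. The element `p = A^{w_m} A = E^{m+1} A^{m+1}` fixes
`A^k` from the left and is a right multiple of it, so every `c` with `c A^k = A^k` fixes `p`.
Hence `R(A^{w_m,†}) = R(A^k)`, a subspace on which both `A` and `A^k` act injectively, and (b)
and (d) each determine `X`. Dually, `p` and `(A^k)^* A^{m+1}` are left multiples of one another
because `A E` is a self-adjoint projection onto `R(A^k)`; so the kernel condition makes `X`
absorb `A A^†` on the right, and `X A = p` determines `X`. Finally, `A^*` can be cancelled in
(c) and (f) since `(A^†)^* A^* A = A = A A^* (A^†)^*`. -/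

section Semigroup

variable {S : Type*} [Semigroup S] {b c u x y z : S}

theorem mul_eq_self_of_dvd (h : c * b = b) (hx : b ∣ x) : c * x = x := by
  obtain ⟨y, rfl⟩ := hx
  rw [← mul_assoc, h]

theorem eq_of_mul_eq_mul_of_dvd (h : u * z * b = b) (hx : b ∣ x) (hy : b ∣ y)
    (hxy : z * x = z * y) : x = y := by
  rw [← mul_eq_self_of_dvd h hx, ← mul_eq_self_of_dvd h hy, mul_assoc, hxy, mul_assoc]

end Semigroup

section Monoid

variable {M : Type*} [Monoid M] {a d e p : M} {k : ℕ}

theorem mul_pow_succ_of_mul_mul_eq (h : p * (a * p) = a * p) (j : ℕ) :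
    (a * p) ^ (j + 1) = a ^ (j + 1) * p := by
  induction j with
  | zero => simp
  | succ j ih => rw [pow_succ, ih, mul_assoc, h, ← mul_assoc, ← pow_succ]

theorem pow_mul_pow_succ_of_mul_sq (h : a * e ^ 2 = e) (j : ℕ) : a ^ j * e ^ (j + 1) = e := by
  induction j with
  | zero => simp
  | succ j ih =>
    calc a ^ (j + 1) * e ^ (j + 2) = a ^ j * (a * e ^ 2 * e ^ j) := by
          rw [pow_succ, add_comm j 2, pow_add e]
          simp only [mul_assoc]
      _ = e := by rw [h, ← pow_succ', ih]

theorem pow_mul_pow_mul_pow_of_mul_pow_succ (h : e * a ^ (k + 1) = a ^ k) (j : ℕ) :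
    e ^ j * a ^ j * a ^ k = a ^ k := by
  induction j with
  | zero => simp
  | succ j ih =>
    calc e ^ (j + 1) * a ^ (j + 1) * a ^ k = e ^ j * (e * a ^ (k + 1) * a ^ j) := by
          rw [pow_succ, mul_assoc, mul_assoc, mul_assoc, ← pow_add, ← pow_add]
          congr 3
          omega
      _ = e ^ j * a ^ j * a ^ k := by rw [h, mul_assoc, ← pow_add, ← pow_add, add_comm]
      _ = a ^ k := ih

theorem pow_dvd_of_mul_sq (h : a * e ^ 2 = e) (j : ℕ) : a ^ j ∣ e :=
  ⟨e ^ (j + 1), (pow_mul_pow_succ_of_mul_sq h j).symm⟩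

/-- The `m`-weak group inverse `e ^ (m + 1) * a ^ m` of `a`, where `e` stands for the core-EP
inverse of `a`. -/
def mWeakGroupInverse (a e : M) (m : ℕ) : M :=
  e ^ (m + 1) * a ^ m

theorem mWeakGroupInverse_mul_self (a e : M) (m : ℕ) :
    mWeakGroupInverse a e m * a = e ^ (m + 1) * a ^ (m + 1) := by
  rw [mWeakGroupInverse, mul_assoc, ← pow_succ]

theorem mWeakGroupInverse_mul_mul_pow (h : e * a ^ (k + 1) = a ^ k) (m : ℕ) :
    mWeakGroupInverse a e m * a * a ^ k = a ^ k := by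
  rw [mWeakGroupInverse_mul_self, pow_mul_pow_mul_pow_of_mul_pow_succ h]

theorem pow_dvd_mWeakGroupInverse (h : a * e ^ 2 = e) (k m : ℕ) :
    a ^ k ∣ mWeakGroupInverse a e m := by
  rw [mWeakGroupInverse, pow_succ', mul_assoc]
  exact (pow_dvd_of_mul_sq h k).mul_right _

theorem mWeakGroupInverse_mul_mul_mul_self (h : a * d * a = a) (m : ℕ) :
    mWeakGroupInverse a e m * a * d * a = mWeakGroupInverse a e m * a := by
  rw [mul_assoc, mul_assoc, ← mul_assoc a, h]

theorem mul_mWeakGroupInverse_mul_pow (h₁ : e * a ^ (k + 1) = a ^ k) (h₂ : a * e ^ 2 = e) (m : ℕ) :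
    (a * mWeakGroupInverse a e m * a) ^ k = a ^ k * (mWeakGroupInverse a e m * a) := by
  have hfix := mWeakGroupInverse_mul_mul_pow h₁ m
  cases k with
  | zero => simpa using hfix.symm
  | succ k =>
    have hdvd : a ^ (k + 1) ∣ a * (mWeakGroupInverse a e m * a) := by
      rw [pow_succ']
      exact mul_dvd_mul_left a ((pow_dvd_mWeakGroupInverse h₂ k m).mul_right a)
    rw [mul_assoc a, mul_pow_succ_of_mul_mul_eq (mul_eq_self_of_dvd hfix hdvd)]

end Monoid

section StarSemigroup

variable {S : Type*} [Semigroup S] [StarMul S] {a d x y : S}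

/-- `d` is a `{1,3,4}`-inverse of `a`: it satisfies the Penrose equations other than
`d * a * d = d`. -/
structure IsOneThreeFourInverse (a d : S) : Prop where
  mul_mul_self : a * d * a = a
  isSelfAdjoint_self_mul : IsSelfAdjoint (a * d)
  isSelfAdjoint_mul_self : IsSelfAdjoint (d * a)

theorem star_mul_mul_cancel_iff (h : a * d * a = a) (h' : IsSelfAdjoint (a * d)) :
    star a * (a * x) = star a * (a * y) ↔ a * x = a * y := by
  refine ⟨fun hxy => ?_, fun hxy => by rw [hxy]⟩
  have hcancel : star d * (star a * a) = a := by rw [← mul_assoc, ← star_mul, h'.star_eq, h]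
  rw [← hcancel, mul_assoc, mul_assoc, hxy, mul_assoc, mul_assoc]

theorem mul_mul_star_cancel_iff (h : a * d * a = a) (h' : IsSelfAdjoint (d * a)) :
    x * a * star a = y * a * star a ↔ x * a = y * a := by
  refine ⟨fun hxy => ?_, fun hxy => by rw [hxy]⟩
  have hcancel : a * star a * star d = a := by
    rw [mul_assoc, ← star_mul, h'.star_eq, ← mul_assoc, h]
  rw [← hcancel, ← mul_assoc, ← mul_assoc, hxy, mul_assoc, mul_assoc, ← mul_assoc a]

end StarSemigroup

section StarMonoid

variable {M : Type*} [Monoid M] [StarMul M] {a e : M} {k : ℕ}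

/-- `e` is the core-EP inverse (pseudo core inverse) of `a` in a monoid with involution. As usual
for this notion outside matrix rings, `k` is any exponent for which the first equation holds, not
necessarily the smallest one. -/
structure IsPseudoCoreInverse (a : M) (k : ℕ) (e : M) : Prop where
  mul_pow_succ : e * a ^ (k + 1) = a ^ k
  mul_sq : a * e ^ 2 = e
  isSelfAdjoint_self_mul : IsSelfAdjoint (a * e)

namespace IsPseudoCoreInverse

theorem star_pow_mul_mul (h : IsPseudoCoreInverse a k e) :
    star (a ^ k) * (a * e) = star (a ^ k) := by
  have hfix : a * e * a ^ k = a ^ k := by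
    rw [← h.mul_pow_succ, ← mul_assoc, mul_assoc a, ← sq, h.mul_sq]
  rw [← h.isSelfAdjoint_self_mul.star_eq, ← star_mul, hfix]

theorem mul_mul_self (h : IsPseudoCoreInverse a k e) : e * a * e = e := by
  refine mul_eq_self_of_dvd ?_ (pow_dvd_of_mul_sq h.mul_sq k)
  rw [mul_assoc, ← pow_succ', h.mul_pow_succ]

theorem exists_eq_mul_star_pow (h : IsPseudoCoreInverse a k e) : ∃ z, e = z * star (a ^ k) := by
  have hdvd : a ^ (k + 1) ∣ a * e := by
    rw [pow_succ']
    exact mul_dvd_mul_left a (pow_dvd_of_mul_sq h.mul_sq k)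
  obtain ⟨y, hy⟩ := (pow_dvd_pow a k.le_succ).trans hdvd
  refine ⟨e * star y, ?_⟩
  rw [mul_assoc, ← star_mul, ← hy, h.isSelfAdjoint_self_mul.star_eq, ← mul_assoc, h.mul_mul_self]

theorem star_pow_mul_pow_mul_mWeakGroupInverse (h : IsPseudoCoreInverse a k e) (m : ℕ) :
    star (a ^ k) * a ^ (m + 1) * (mWeakGroupInverse a e m * a) = star (a ^ k) * a ^ (m + 1) := by
  have hproj : a ^ (m + 1) * e ^ (m + 1) = a * e := by
    rw [pow_succ', mul_assoc, pow_mul_pow_succ_of_mul_sq h.mul_sq]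
  rw [mWeakGroupInverse_mul_self, mul_assoc, ← mul_assoc (a ^ _), hproj, ← mul_assoc,
    h.star_pow_mul_mul]

theorem exists_mWeakGroupInverse_mul_self_eq (h : IsPseudoCoreInverse a k e) (m : ℕ) :
    ∃ z, mWeakGroupInverse a e m * a = z * (star (a ^ k) * a ^ (m + 1)) := by
  obtain ⟨z, hz⟩ := h.exists_eq_mul_star_pow
  refine ⟨e ^ m * z, ?_⟩
  rw [mWeakGroupInverse_mul_self, ← mul_assoc, mul_assoc (e ^ m), ← hz, ← pow_succ]

end IsPseudoCoreInverse

end StarMonoid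

section MulVecLin

variable {l m n R : Type*}

theorem range_mulVecLin_le_iff_exists_eq_mul [CommSemiring R] [Fintype m] [Fintype n]
    {X : Matrix l n R} {B : Matrix l m R} :
    LinearMap.range X.mulVecLin ≤ LinearMap.range B.mulVecLin ↔ ∃ C : Matrix m n R, X = B * C := by
  constructor
  · classical
    intro h
    choose w hw using fun j => h ⟨Pi.single j 1, rfl⟩
    refine ⟨(of w)ᵀ, ext_of_mulVec_single fun j => ?_⟩
    rw [← mulVec_mulVec, mulVec_single_one (of w)ᵀ]
    exact (hw j).symm
  · rintro ⟨C, rfl⟩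
    rw [mulVecLin_mul]
    exact LinearMap.range_comp_le_range _ _

theorem range_mulVecLin_eq_iff_dvd [CommSemiring R] [Fintype n] {X B : Matrix n n R} :
    LinearMap.range X.mulVecLin = LinearMap.range B.mulVecLin ↔ B ∣ X ∧ X ∣ B := by
  rw [le_antisymm_iff, range_mulVecLin_le_iff_exists_eq_mul, range_mulVecLin_le_iff_exists_eq_mul]
  rfl

theorem ker_mulVecLin_le_ker_mul [CommSemiring R] [Fintype m] [Fintype n] (Z : Matrix l m R)
    (B : Matrix m n R) : LinearMap.ker B.mulVecLin ≤ LinearMap.ker (Z * B).mulVecLin := by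
  rw [mulVecLin_mul]
  exact LinearMap.ker_le_ker_comp _ _

theorem mul_eq_self_of_ker_mulVecLin_le [CommRing R] [Fintype n] {B : Matrix l n R}
    {C : Matrix n n R} {X : Matrix m n R}
    (h : LinearMap.ker B.mulVecLin ≤ LinearMap.ker X.mulVecLin) (hBC : B * C = B) :
    X * C = X := by
  classical
  refine ext_of_mulVec_single fun i => ?_
  have hmem : C *ᵥ Pi.single i 1 - Pi.single i 1 ∈ LinearMap.ker B.mulVecLin := by
    simp only [LinearMap.mem_ker, mulVecLin_apply, mulVec_sub, mulVec_mulVec, hBC, sub_self]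
  simpa only [LinearMap.mem_ker, mulVecLin_apply, mulVec_sub, mulVec_mulVec, sub_eq_zero]
    using h hmem

theorem eq_of_range_mulVecLin_eq_of_mul_eq [CommSemiring R] [Fintype n] {U X Y Z B : Matrix n n R}
    (h : U * Z * B = B) (hX : LinearMap.range X.mulVecLin = LinearMap.range B.mulVecLin)
    (hY : LinearMap.range Y.mulVecLin = LinearMap.range B.mulVecLin) (hXY : Z * X = Z * Y) :
    X = Y :=
  eq_of_mul_eq_mul_of_dvd h (range_mulVecLin_eq_iff_dvd.1 hX).1 (range_mulVecLin_eq_iff_dvd.1 hY).1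
    hXY

theorem eq_mul_of_ker_mulVecLin_eq [CommRing R] [Fintype n] {A D P X : Matrix n n R}
    (hP : P * D * A = P)
    (hker : LinearMap.ker X.mulVecLin = LinearMap.ker (P * D).mulVecLin) (hX : X * A = P) :
    X = P * D := by
  have hproj : P * D * (A * D) = P * D := by rw [← mul_assoc, hP]
  rw [← mul_eq_self_of_ker_mulVecLin_le hker.ge hproj, ← mul_assoc, hX]

end MulVecLin

section CommRing

variable {n R : Type*} [Fintype n] [DecidableEq n] [CommRing R] {k : ℕ}
  {A E D X : Matrix n n R}

theorem range_mulVecLin_mWeakGroupInverse_mul_mul (h₁ : E * A ^ (k + 1) = A ^ k)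
    (h₂ : A * E ^ 2 = E) (hD : A * D * A = A) (m : ℕ) :
    LinearMap.range (mWeakGroupInverse A E m * A * D).mulVecLin =
      LinearMap.range (A ^ k).mulVecLin := by
  refine range_mulVecLin_eq_iff_dvd.2
    ⟨((pow_dvd_mWeakGroupInverse h₂ k m).mul_right A).mul_right D, A * A ^ k, ?_⟩
  rw [← mul_assoc, mWeakGroupInverse_mul_mul_mul_self hD, mWeakGroupInverse_mul_mul_pow h₁]

variable [StarRing R]

theorem IsPseudoCoreInverse.ker_mulVecLin_mWeakGroupInverse_mul_mul (h : IsPseudoCoreInverse A k E)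
    (D : Matrix n n R) (m : ℕ) :
    LinearMap.ker (mWeakGroupInverse A E m * A * D).mulVecLin =
      LinearMap.ker ((A ^ k)ᴴ * A ^ (m + 1) * D).mulVecLin := by
  obtain ⟨Z, hZ⟩ := h.exists_mWeakGroupInverse_mul_self_eq m
  have hW := h.star_pow_mul_pow_mul_mWeakGroupInverse m
  rw [star_eq_conjTranspose] at hZ hW
  apply le_antisymm
  · rw [← hW, mul_assoc _ (_ * A) D]
    exact ker_mulVecLin_le_ker_mul _ _
  · rw [hZ, mul_assoc Z]
    exact ker_mulVecLin_le_ker_mul _ _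

theorem m_WGMP_inverse_characterizations_range_null_general (hE : IsPseudoCoreInverse A k E)
    (hD : IsOneThreeFourInverse A D) (m : ℕ) :
    [X = mWeakGroupInverse A E m * A * D,
     LinearMap.range X.mulVecLin = LinearMap.range (A ^ k).mulVecLin ∧
       A * X = (A * mWeakGroupInverse A E m * A) * D,
     LinearMap.range X.mulVecLin = LinearMap.range (A ^ k).mulVecLin ∧
       Aᴴ * A * X = Aᴴ * (A * mWeakGroupInverse A E m * A) * D,
     LinearMap.range X.mulVecLin = LinearMap.range (A ^ k).mulVecLin ∧
       A ^ k * X = (A * mWeakGroupInverse A E m * A) ^ k * D,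
     LinearMap.ker X.mulVecLin = LinearMap.ker ((A ^ k)ᴴ * A ^ (m + 1) * D).mulVecLin ∧
       X * A = mWeakGroupInverse A E m * A,
     LinearMap.ker X.mulVecLin = LinearMap.ker ((A ^ k)ᴴ * A ^ (m + 1) * D).mulVecLin ∧
       X * A * Aᴴ = mWeakGroupInverse A E m * A * Aᴴ].TFAE := by
  have hpow (j : ℕ) := pow_mul_pow_mul_pow_of_mul_pow_succ hE.mul_pow_succ j
  have hrange := range_mulVecLin_mWeakGroupInverse_mul_mul hE.mul_pow_succ hE.mul_sq
    hD.mul_mul_self m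
  have hWDA := mWeakGroupInverse_mul_mul_mul_self (e := E) hD.mul_mul_self m
  rw [← hE.ker_mulVecLin_mWeakGroupInverse_mul_mul D m,
    mul_mWeakGroupInverse_mul_pow hE.mul_pow_succ hE.mul_sq]
  tfae_have 1 → 2 := by
    rintro rfl
    exact ⟨hrange, by simp only [mul_assoc]⟩
  tfae_have 2 → 1 := fun ⟨hX, hAX⟩ =>
    eq_of_range_mulVecLin_eq_of_mul_eq (by simpa using hpow 1) hX hrange
      (by rw [hAX]; simp only [mul_assoc])
  tfae_have 2 ↔ 3 := by
    simpa only [mul_assoc, star_eq_conjTranspose] using and_congr_right'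
      (star_mul_mul_cancel_iff hD.mul_mul_self hD.isSelfAdjoint_self_mul).symm
  tfae_have 1 → 4 := by
    rintro rfl
    exact ⟨hrange, (mul_assoc _ _ _).symm⟩
  tfae_have 4 → 1 := fun ⟨hX, hAX⟩ =>
    eq_of_range_mulVecLin_eq_of_mul_eq (hpow k) hX hrange (by rw [hAX, mul_assoc])
  tfae_have 1 → 5 := by
    rintro rfl
    exact ⟨rfl, hWDA⟩
  tfae_have 5 → 1 := fun ⟨hX, hXA⟩ => eq_mul_of_ker_mulVecLin_eq hWDA hX hXA
  tfae_have 5 ↔ 6 :=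
    and_congr_right' (mul_mul_star_cancel_iff hD.mul_mul_self hD.isSelfAdjoint_mul_self).symm
  tfae_finish

end CommRing

/-- Characterizations of the `m`-WGMP inverse via range space, null space and
matrix equations. Here `A₁ = A A^{w_m} A`. -/
theorem m_WGMP_inverse_characterizations_range_null {n k m : ℕ}
    (A AEP Adag X : Matrix (Fin n) (Fin n) ℂ)
    (hk : HasIndex A k) (hm : 0 < m)
    (hEP : IsCoreEP A k AEP)
    (hdag : IsMoorePenrose A Adag) :
    [X = (AEP ^ (m + 1) * A ^ m) * A * Adag,
     LinearMap.range X.mulVecLin = LinearMap.range (A ^ k).mulVecLin ∧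
       A * X = (A * (AEP ^ (m + 1) * A ^ m) * A) * Adag,
     LinearMap.range X.mulVecLin = LinearMap.range (A ^ k).mulVecLin ∧
       Aᴴ * A * X = Aᴴ * (A * (AEP ^ (m + 1) * A ^ m) * A) * Adag,
     LinearMap.range X.mulVecLin = LinearMap.range (A ^ k).mulVecLin ∧
       A ^ k * X = (A * (AEP ^ (m + 1) * A ^ m) * A) ^ k * Adag,
     LinearMap.ker X.mulVecLin = LinearMap.ker ((A ^ k)ᴴ * A ^ (m + 1) * Adag).mulVecLin ∧
       X * A = (AEP ^ (m + 1) * A ^ m) * A,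
     LinearMap.ker X.mulVecLin = LinearMap.ker ((A ^ k)ᴴ * A ^ (m + 1) * Adag).mulVecLin ∧
       X * A * Aᴴ = (AEP ^ (m + 1) * A ^ m) * A * Aᴴ].TFAE := by
  obtain ⟨h₁, -, h₃, h₄⟩ := hdag
  exact m_WGMP_inverse_characterizations_range_null_general ⟨hEP.1, hEP.2.1, hEP.2.2⟩ ⟨h₁, h₃, h₄⟩ m
end

section
/- Let A be an n×n complex matrix with k = Ind(A), let m be a positive integer, set A₁ = A A^{w_m} A, and let X be an n×n complex matrix. The following conditions are equivalent: (a) X = A^{w_m,†}; (b) X A^{k+1} = A^k, rank(X) = rank(A^k) and A^* A X = A^* A₁ A^†; (c) X A^{k+1} = A^k, rank(X) = rank(A^k) and A X = A₁ A^†; (d) X A^{k+1} = A^k, rank(X) = rank(A^k) and A^k X = A₁^k A^†. -/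
open Matrix

/-!
Call `X` a minimal weak Drazin inverse of `A` if `X * A ^ (k + 1) = A ^ k` and `A * X ^ 2 = X`.
Given the first equation, the second one says exactly that `X` and `A ^ k` have the same rank.
Such an `X` factors through `A ^ k`, and left multiplication by any power of `A` is injective on
the range of `A ^ k`, so `X` is determined by any single product `A ^ j * X`. The core-EP inverse
is a minimal weak Drazin inverse, the property passes to `A^{w_m}` and then to `A^{w_m} A A^†`, and
the conditions of the theorem prescribe `A ^ j * X` for `j = 1` and `j = k`.
-/

section MinimalWeakDrazin

variable {M : Type*} [Monoid M] {a g w x y : M} {k : ℕ}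

/-- `x` is a minimal weak Drazin inverse of `a` (Wu–Chen), with `k` an exponent that witnesses it;
for a square matrix over a field one exists exactly when `k` is at least the index of `a`. It is
a common generalization of the core-EP, `m`-weak group and `m`-weak group MP inverses. -/
structure IsMinimalWeakDrazin (a : M) (k : ℕ) (x : M) : Prop where
  mul_pow_succ : x * a ^ (k + 1) = a ^ k
  mul_sq : a * x ^ 2 = x

namespace IsMinimalWeakDrazin

theorem pow_mul_pow_add (hx : IsMinimalWeakDrazin a k x) (j : ℕ) :
    x ^ j * a ^ (k + j) = a ^ k := by
  induction j with
  | zero => simp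
  | succ j ih =>
    calc x ^ (j + 1) * a ^ (k + (j + 1))
        = x ^ j * (x * a ^ (k + 1) * a ^ j) := by
          rw [mul_assoc x, ← pow_add, ← mul_assoc, ← pow_succ, add_assoc, add_comm 1 j]
      _ = a ^ k := by rw [hx.mul_pow_succ, ← pow_add, ih]

theorem pow_mul_pow_succ (hx : IsMinimalWeakDrazin a k x) (j : ℕ) :
    a ^ j * x ^ (j + 1) = x := by
  induction j with
  | zero => simp
  | succ j ih =>
    calc a ^ (j + 1) * x ^ (j + 1 + 1)
        = a ^ j * (a * x ^ 2 * x ^ j) := by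
          rw [mul_assoc a, ← pow_add, ← mul_assoc, ← pow_succ, add_comm 2 j]
      _ = x := by rw [hx.mul_sq, ← pow_succ', ih]

theorem pow_mul_pow_add_mul (hx : IsMinimalWeakDrazin a k x) (hy : IsMinimalWeakDrazin a k y)
    (i j : ℕ) : x ^ i * a ^ (i + j) * y = a ^ j * y := by
  -- `y` factors through `a ^ k`, on which `x ^ i` undoes `a ^ i`.
  calc x ^ i * a ^ (i + j) * y
      = x ^ i * a ^ (i + j) * (a ^ k * y ^ (k + 1)) := by rw [hy.pow_mul_pow_succ]
    _ = x ^ i * a ^ (k + i) * a ^ j * y ^ (k + 1) := by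
        rw [mul_assoc (x ^ i) (a ^ (k + i)), ← pow_add, ← mul_assoc, mul_assoc (x ^ i), ← pow_add]
        congr 3; ring
    _ = a ^ j * (a ^ k * y ^ (k + 1)) := by
        rw [hx.pow_mul_pow_add, ← pow_add, ← mul_assoc, ← pow_add, add_comm]
    _ = a ^ j * y := by rw [hy.pow_mul_pow_succ]

theorem eq_of_pow_mul_eq (hx : IsMinimalWeakDrazin a k x) (hy : IsMinimalWeakDrazin a k y)
    {j : ℕ} (h : a ^ j * x = a ^ j * y) : x = y :=
  calc x = x ^ j * a ^ j * x := by simpa using (hx.pow_mul_pow_add_mul hx j 0).symm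
    _ = x ^ j * a ^ j * y := by rw [mul_assoc, h, mul_assoc]
    _ = y := by simpa using hx.pow_mul_pow_add_mul hy j 0

theorem mul_mul_pow (hw : IsMinimalWeakDrazin a k w) : (a * w * a) ^ k = a ^ k * w * a := by
  have hpow (j : ℕ) : (a * w * a) ^ (j + 1) = a ^ (j + 1) * w * a := by
    induction j with
    | zero => simp
    | succ j ih =>
      have hsq : w * a ^ 2 * w = a * w := by simpa using hw.pow_mul_pow_add_mul hw 1 1
      calc (a * w * a) ^ (j + 1 + 1)
          = a ^ (j + 1) * (w * a ^ 2 * w) * a := by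
            rw [pow_succ, ih, sq]; simp only [mul_assoc]
        _ = a ^ (j + 1 + 1) * w * a := by rw [hsq, pow_succ a (j + 1)]; simp only [mul_assoc]
  cases k with
  | zero => simpa using hw.mul_pow_succ.symm
  | succ j => exact hpow j

theorem pow_succ_mul_pow (hx : IsMinimalWeakDrazin a k x) (m : ℕ) :
    IsMinimalWeakDrazin a k (x ^ (m + 1) * a ^ m) where
  mul_pow_succ := by
    rw [mul_assoc, ← pow_add, show m + (k + 1) = k + (m + 1) by ring, hx.pow_mul_pow_add]
  mul_sq :=
    calc a * (x ^ (m + 1) * a ^ m) ^ 2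
        = a * x ^ (m + 1) * (a ^ m * x ^ (m + 1)) * a ^ m := by rw [sq]; simp only [mul_assoc]
      _ = a * x ^ 2 * x ^ m * a ^ m := by
          rw [hx.pow_mul_pow_succ, mul_assoc a, ← pow_succ, mul_assoc a (x ^ 2), ← pow_add,
            add_comm 2 m]
      _ = x ^ (m + 1) * a ^ m := by rw [hx.mul_sq, pow_succ']

theorem mul_mul_innerInverse (hw : IsMinimalWeakDrazin a k w) (hg : a * g * a = a) :
    IsMinimalWeakDrazin a k (w * a * g) where
  mul_pow_succ :=
    calc w * a * g * a ^ (k + 1) = w * (a * g * a) * a ^ k := by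
          rw [pow_succ']; simp only [mul_assoc]
      _ = a ^ k := by rw [hg, mul_assoc, ← pow_succ', hw.mul_pow_succ]
  mul_sq := by
    have hagw : a * g * w = w :=
      calc a * g * w = a * g * a * w ^ 2 := by rw [mul_assoc (a * g), hw.mul_sq]
        _ = w := by rw [hg, hw.mul_sq]
    calc a * (w * a * g) ^ 2 = a * w * (a * g * w) * a * g := by rw [sq]; simp only [mul_assoc]
      _ = a * w ^ 2 * a * g := by rw [hagw, mul_assoc a w w, ← sq]
      _ = w * a * g := by rw [hw.mul_sq]

end IsMinimalWeakDrazin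

end MinimalWeakDrazin

section Matrix

variable {m n p K : Type*} [Fintype n] [Field K]

theorem range_mulVecLin_eq_of_mul_eq_of_rank_eq [Finite m] [Fintype p] {X : Matrix m n K}
    {C : Matrix n p K} {B : Matrix m p K} (h : X * C = B) (hr : X.rank = B.rank) :
    LinearMap.range X.mulVecLin = LinearMap.range B.mulVecLin := by
  refine (Submodule.eq_of_le_of_finrank_eq ?_ hr.symm).symm
  rw [← h, Matrix.mulVecLin_mul]
  exact LinearMap.range_comp_le_range _ _

theorem conjTranspose_mul_self_mul_inj [PartialOrder K] [StarRing K] [StarOrderedRing K]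
    [Fintype m] {A : Matrix m n K} {X Y : Matrix n p K} :
    Aᴴ * A * X = Aᴴ * A * Y ↔ A * X = A * Y := by
  rw [← sub_eq_zero, ← Matrix.mul_sub, conjTranspose_mul_self_mul_eq_zero, Matrix.mul_sub,
    sub_eq_zero]

variable [DecidableEq n] {A X Y W G : Matrix n n K} {k : ℕ}

theorem mul_sq_eq_of_rank_eq (hX : X * A ^ (k + 1) = A ^ k) (hr : X.rank = (A ^ k).rank) :
    A * X ^ 2 = X := by
  have hX' : X * A ^ (k + 2) = A ^ (k + 1) := by rw [pow_succ A (k + 1), ← mul_assoc, hX, pow_succ]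
  have hr' : X.rank = (A ^ (k + 1)).rank := by
    refine le_antisymm ?_ (hX' ▸ rank_mul_le_left _ _)
    rw [hr]
    conv_lhs => rw [← hX]
    exact rank_mul_le_right _ _
  have hrange := range_mulVecLin_eq_of_mul_eq_of_rank_eq hX' hr'
  refine ext_of_mulVec_single fun i => ?_
  obtain ⟨v, hv⟩ : ∃ v, A ^ (k + 1) *ᵥ v = X *ᵥ Pi.single i 1 :=
    hrange.le ⟨Pi.single i 1, rfl⟩
  calc (A * X ^ 2) *ᵥ Pi.single i 1 = (A * (X * A ^ (k + 1))) *ᵥ v := by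
        rw [sq, ← mul_assoc, ← mulVec_mulVec, ← hv, mulVec_mulVec, mul_assoc]
    _ = X *ᵥ Pi.single i 1 := by rw [hX, ← pow_succ', hv]

theorem isMinimalWeakDrazin_iff_rank_eq :
    IsMinimalWeakDrazin A k X ↔ X * A ^ (k + 1) = A ^ k ∧ X.rank = (A ^ k).rank := by
  refine ⟨fun h => ⟨h.mul_pow_succ, le_antisymm ?_ ?_⟩, fun ⟨hX, hr⟩ =>
    ⟨hX, mul_sq_eq_of_rank_eq hX hr⟩⟩
  · conv_lhs => rw [← h.pow_mul_pow_succ k]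
    exact rank_mul_le_left _ _
  · rw [← h.mul_pow_succ]
    exact rank_mul_le_left _ _

theorem IsMinimalWeakDrazin.eq_iff_rank_eq_and_pow_mul_eq (hY : IsMinimalWeakDrazin A k Y)
    (j : ℕ) :
    X = Y ↔ X * A ^ (k + 1) = A ^ k ∧ X.rank = (A ^ k).rank ∧ A ^ j * X = A ^ j * Y := by
  rw [← and_assoc, ← isMinimalWeakDrazin_iff_rank_eq]
  exact ⟨by rintro rfl; exact ⟨hY, rfl⟩, fun ⟨hX, h⟩ => hX.eq_of_pow_mul_eq hY h⟩

theorem m_WGMP_inverse_characterizations_rank_general [PartialOrder K] [StarRing K]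
    [StarOrderedRing K] (hW : IsMinimalWeakDrazin A k W) (hG : A * G * A = A) :
    [X = W * A * G,
     X * A ^ (k + 1) = A ^ k ∧ X.rank = (A ^ k).rank ∧ Aᴴ * A * X = Aᴴ * (A * W * A) * G,
     X * A ^ (k + 1) = A ^ k ∧ X.rank = (A ^ k).rank ∧ A * X = A * W * A * G,
     X * A ^ (k + 1) = A ^ k ∧ X.rank = (A ^ k).rank ∧ A ^ k * X = (A * W * A) ^ k * G].TFAE := by
  have hY := hW.mul_mul_innerInverse hG
  tfae_have 1 ↔ 3 := by
    simpa only [pow_one, mul_assoc] using hY.eq_iff_rank_eq_and_pow_mul_eq 1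
  tfae_have 1 ↔ 4 := by
    rw [hW.mul_mul_pow]
    simpa only [mul_assoc] using hY.eq_iff_rank_eq_and_pow_mul_eq k
  tfae_have 2 ↔ 3 := by
    have hcancel := conjTranspose_mul_self_mul_inj (A := A) (X := X) (Y := W * A * G)
    simp only [mul_assoc] at hcancel ⊢
    rw [hcancel]
  tfae_finish

end Matrix

theorem IsCoreEP.isMinimalWeakDrazin {n k : ℕ} {A E : Matrix (Fin n) (Fin n) ℂ}
    (h : IsCoreEP A k E) : IsMinimalWeakDrazin A k E :=
  ⟨h.1, h.2.1⟩

/-- Characterizations of the `m`-WGMP inverse via `X A^{k+1} = A^k` and rank.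
Here `A₁ = A A^{w_m} A`. -/
theorem m_WGMP_inverse_characterizations_rank {n k m : ℕ}
    (A AEP Adag X : Matrix (Fin n) (Fin n) ℂ)
    (hk : HasIndex A k) (hm : 0 < m)
    (hEP : IsCoreEP A k AEP)
    (hdag : IsMoorePenrose A Adag) :
    [X = (AEP ^ (m + 1) * A ^ m) * A * Adag,
     X * A ^ (k + 1) = A ^ k ∧ X.rank = (A ^ k).rank ∧
       Aᴴ * A * X = Aᴴ * (A * (AEP ^ (m + 1) * A ^ m) * A) * Adag,
     X * A ^ (k + 1) = A ^ k ∧ X.rank = (A ^ k).rank ∧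
       A * X = (A * (AEP ^ (m + 1) * A ^ m) * A) * Adag,
     X * A ^ (k + 1) = A ^ k ∧ X.rank = (A ^ k).rank ∧
       A ^ k * X = (A * (AEP ^ (m + 1) * A ^ m) * A) ^ k * Adag].TFAE := by
  open scoped ComplexOrder in
  exact m_WGMP_inverse_characterizations_rank_general
    (hEP.isMinimalWeakDrazin.pow_succ_mul_pow m) hdag.1
end
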